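/- Let F be a field with char F ≠ 2 and let α, β ∈ F be such that 1, 0, α, β are pairwise distinct, with α ≠ 2β and α ≠ 4β. Then every 2-generated axial algebra of Monster type (α, β) over F has dimension at most 8 as an F-vector space. -/

import Mathlib

/- STATEMENT 0: Rehren's dimension bound for 2-generated axial algebras of
Monster type (α, β) with α ≠ 2β, 4β. -/

variable (F : Type*) [Field F] (A : Type*) [NonUnitalNonAssocCommRing A]
  [Module F A] [SMulCommClass F A A] [IsScalarTower F A A]

/-- The `μ`-eigenspace of the left multiplication operator by `a`. -/
def axEig (a : A) (μ : F) : Submodule F A where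
  carrier := {x | a * x = μ • x}
  zero_mem' := by simp
  add_mem' := fun hx hy => by
    simp only [Set.mem_setOf_eq] at *
    rw [mul_add, hx, hy, smul_add]
  smul_mem' := fun c x hx => by
    simp only [Set.mem_setOf_eq] at *
    rw [mul_smul_comm, hx, smul_smul, smul_smul, mul_comm]

/-- `a` is a primitive axis of Monster type `(α, β)`: an idempotent such that the algebra
is the internal direct sum of the eigenspaces `A_1 ⊕ A_0 ⊕ A_α ⊕ A_β` of ad(a), with
`A_1 = F·a`, and the eigenspaces multiply according to the fusion law `M(α, β)`. -/
structure IsPrimitiveMonsterAxis (α β : F) (a : A) : Prop where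
  idem : a * a = a
  decomp : DirectSum.IsInternal
    (![axEig F A a 1, axEig F A a 0, axEig F A a α, axEig F A a β] : Fin 4 → Submodule F A)
  primitive : axEig F A a 1 = Submodule.span F {a}
  f11 : ∀ x ∈ axEig F A a 1, ∀ y ∈ axEig F A a 1, x * y ∈ axEig F A a 1
  f10 : ∀ x ∈ axEig F A a 1, ∀ y ∈ axEig F A a 0, x * y = 0
  f1a : ∀ x ∈ axEig F A a 1, ∀ y ∈ axEig F A a α, x * y ∈ axEig F A a α
  f1b : ∀ x ∈ axEig F A a 1, ∀ y ∈ axEig F A a β, x * y ∈ axEig F A a β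
  f00 : ∀ x ∈ axEig F A a 0, ∀ y ∈ axEig F A a 0, x * y ∈ axEig F A a 0
  f0a : ∀ x ∈ axEig F A a 0, ∀ y ∈ axEig F A a α, x * y ∈ axEig F A a α
  f0b : ∀ x ∈ axEig F A a 0, ∀ y ∈ axEig F A a β, x * y ∈ axEig F A a β
  faa : ∀ x ∈ axEig F A a α, ∀ y ∈ axEig F A a α, x * y ∈ axEig F A a 1 ⊔ axEig F A a 0
  fab : ∀ x ∈ axEig F A a α, ∀ y ∈ axEig F A a β, x * y ∈ axEig F A a β
  fbb : ∀ x ∈ axEig F A a β, ∀ y ∈ axEig F A a β,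
    x * y ∈ axEig F A a 1 ⊔ axEig F A a 0 ⊔ axEig F A a α

/-- `A` is a 2-generated axial algebra of Monster type `(α, β)`:
it is generated as an `F`-algebra by two primitive axes of Monster type `(α, β)`. -/
def IsTwoGeneratedMonsterType (α β : F) : Prop :=
  ∃ a b : A, IsPrimitiveMonsterAxis F A α β a ∧ IsPrimitiveMonsterAxis F A α β b ∧
    NonUnitalAlgebra.adjoin F ({a, b} : Set A) = ⊤

set_option linter.unusedSectionVars false

section Axis

variable {F A} {α β : F} {a : A}

@[simp]
theorem mem_axEig {μ : F} {x : A} : x ∈ axEig F A a μ ↔ a * x = μ • x := Iff.rfl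

/-- The sum of the eigenspaces of `a` which the Miyamoto involution fixes pointwise. -/
def evenPart (α : F) (a : A) : Submodule F A :=
  axEig F A a 1 ⊔ axEig F A a 0 ⊔ axEig F A a α

/-- The Miyamoto involution of an axis `a` of Monster type `(α, β)`, written as a polynomial in
the multiplication by `a`: it negates the `β`-eigenspace and fixes the other ones. -/
def miyamoto (α β : F) (a : A) : A →ₗ[F] A :=
  LinearMap.id - (2 / (β * (β - 1) * (β - α))) •
    (LinearMap.mulLeft F a ∘ₗ (LinearMap.mulLeft F a - LinearMap.id) ∘ₗ
      (LinearMap.mulLeft F a - α • LinearMap.id))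

theorem miyamoto_apply (x : A) : miyamoto α β a x = x - (2 / (β * (β - 1) * (β - α))) •
    (a * (a * (a * x - α • x) - (a * x - α • x))) := rfl

theorem miyamoto_of_mem_axEig (hβ0 : β ≠ 0) (hβ1 : β ≠ 1) (hαβ : α ≠ β) {w : A}
    (hw : w ∈ axEig F A a β) : miyamoto α β a w = -w := by
  have h1 : β - 1 ≠ 0 := sub_ne_zero.2 hβ1
  have h2 : β - α ≠ 0 := sub_ne_zero.2 hαβ.symm
  rw [mem_axEig] at hw
  simp only [miyamoto_apply, hw, mul_sub, mul_smul_comm]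
  match_scalars
  field_simp
  ring

theorem miyamoto_of_mem_evenPart {p : A} (hp : p ∈ evenPart α a) : miyamoto α β a p = p := by
  obtain ⟨q, hq, v, hv, rfl⟩ := Submodule.mem_sup.1 hp
  obtain ⟨l, hl, u, hu, rfl⟩ := Submodule.mem_sup.1 hq
  rw [mem_axEig] at hl hu hv
  simp only [miyamoto_apply, mul_add, hl, hu, hv, mul_sub, mul_smul_comm]
  module

namespace IsPrimitiveMonsterAxis

variable (ha : IsPrimitiveMonsterAxis F A α β a)

include ha

theorem exists_evenPart_add (x : A) : ∃ p ∈ evenPart α a, ∃ w ∈ axEig F A a β, p + w = x := by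
  have h : (⊤ : Submodule F A) ≤ evenPart α a ⊔ axEig F A a β := by
    rw [← ha.decomp.submodule_iSup_eq_top]
    refine iSup_le fun i => ?_
    fin_cases i
    · exact le_sup_left.trans (le_sup_left.trans le_sup_left)
    · exact le_sup_right.trans (le_sup_left.trans le_sup_left)
    · exact le_sup_right.trans le_sup_left
    · exact le_sup_right
  exact Submodule.mem_sup.1 (h Submodule.mem_top)

theorem exists_smul_add_of_mem {x : A} (hx : x ∈ axEig F A a 1 ⊔ axEig F A a 0) :
    ∃ (l : F) (u : A), a * u = 0 ∧ x = l • a + u := by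
  obtain ⟨y, hy, u, hu, rfl⟩ := Submodule.mem_sup.1 hx
  rw [ha.primitive] at hy
  obtain ⟨l, rfl⟩ := Submodule.mem_span_singleton.1 hy
  exact ⟨l, u, by simpa using hu, rfl⟩

theorem exists_smul_add_add_of_mem_evenPart {p : A} (hp : p ∈ evenPart α a) :
    ∃ (l : F) (u v : A), a * u = 0 ∧ a * v = α • v ∧ p = l • a + u + v := by
  obtain ⟨q, hq, v, hv, rfl⟩ := Submodule.mem_sup.1 hp
  obtain ⟨l, u, hu, rfl⟩ := ha.exists_smul_add_of_mem hq
  exact ⟨l, u, v, hu, hv, rfl⟩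

theorem mul_zero_zero {u u' : A} (hu : a * u = 0) (hu' : a * u' = 0) : a * (u * u') = 0 := by
  simpa using ha.f00 u (by simpa using hu) u' (by simpa using hu')

theorem mul_zero_alpha {u v : A} (hu : a * u = 0) (hv : a * v = α • v) :
    a * (u * v) = α • (u * v) :=
  ha.f0a u (by simpa using hu) v hv

theorem mul_alpha_alpha {v v' : A} (hv : a * v = α • v) (hv' : a * v' = α • v') :
    ∃ r : F, a * (v * v') = r • a := by
  obtain ⟨r, t, ht, h⟩ := ha.exists_smul_add_of_mem (ha.faa v hv v' hv')
  exact ⟨r, by rw [h, mul_add, mul_smul_comm, ha.idem, ht, add_zero]⟩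

theorem mul_mem_evenPart {p q : A} (hp : p ∈ evenPart α a) (hq : q ∈ evenPart α a) :
    p * q ∈ evenPart α a := by
  have h1 : ∀ {x}, x ∈ axEig F A a 1 → x ∈ evenPart α a :=
    fun hx => Submodule.mem_sup_left (Submodule.mem_sup_left hx)
  have h0 : ∀ {x}, x ∈ axEig F A a 0 → x ∈ evenPart α a :=
    fun hx => Submodule.mem_sup_left (Submodule.mem_sup_right hx)
  have hα : ∀ {x}, x ∈ axEig F A a α → x ∈ evenPart α a := fun hx => Submodule.mem_sup_right hx
  obtain ⟨l, u, v, hu, hv, rfl⟩ := ha.exists_smul_add_add_of_mem_evenPart hp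
  obtain ⟨m, y, z, hy, hz, rfl⟩ := ha.exists_smul_add_add_of_mem_evenPart hq
  have e : (l • a + u + v) * (m • a + y + z) = (l * m) • a + (l * α) • z + (m * α) • v
      + u * y + u * z + y * v + v * z := by
    simp only [mul_add, add_mul, smul_mul_assoc, mul_smul_comm, ha.idem, hy, hz,
      mul_comm u a, mul_comm v a, hu, hv, mul_comm v y]
    module
  rw [e]
  refine add_mem (add_mem (add_mem (add_mem (add_mem (add_mem ?_ ?_) ?_) ?_) ?_) ?_) ?_
  · exact Submodule.smul_mem _ _ (h1 (by simp [ha.idem]))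
  · exact Submodule.smul_mem _ _ (hα hz)
  · exact Submodule.smul_mem _ _ (hα hv)
  · exact h0 (ha.f00 u (by simpa using hu) y (by simpa using hy))
  · exact hα (ha.f0a u (by simpa using hu) z hz)
  · exact hα (ha.f0a y (by simpa using hy) v hv)
  · exact Submodule.mem_sup_left (ha.faa v hv z hz)

theorem mul_mem_axEig {p w : A} (hp : p ∈ evenPart α a) (hw : w ∈ axEig F A a β) :
    p * w ∈ axEig F A a β := by
  obtain ⟨q, hq, v, hv, rfl⟩ := Submodule.mem_sup.1 hp
  obtain ⟨l, hl, u, hu, rfl⟩ := Submodule.mem_sup.1 hq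
  rw [add_mul, add_mul]
  exact add_mem (add_mem (ha.f1b l hl w hw) (ha.f0b u hu w hw)) (ha.fab v hv w hw)

variable (hβ0 : β ≠ 0) (hβ1 : β ≠ 1) (hαβ : α ≠ β)

include hβ0 hβ1 hαβ

theorem miyamoto_mul (x y : A) :
    miyamoto α β a (x * y) = miyamoto α β a x * miyamoto α β a y := by
  obtain ⟨p, hp, w, hw, rfl⟩ := ha.exists_evenPart_add x
  obtain ⟨q, hq, z, hz, rfl⟩ := ha.exists_evenPart_add y
  have e : (p + w) * (q + z) = p * q + w * z + (p * z + q * w) := by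
    rw [mul_add, add_mul, add_mul, mul_comm w q]; abel
  rw [e, map_add, map_add _ p, map_add _ q,
    miyamoto_of_mem_evenPart (add_mem (ha.mul_mem_evenPart hp hq) (ha.fbb w hw z hz)),
    miyamoto_of_mem_axEig hβ0 hβ1 hαβ (add_mem (ha.mul_mem_axEig hp hz) (ha.mul_mem_axEig hq hw)),
    miyamoto_of_mem_evenPart hp, miyamoto_of_mem_evenPart hq,
    miyamoto_of_mem_axEig hβ0 hβ1 hαβ hw, miyamoto_of_mem_axEig hβ0 hβ1 hαβ hz]
  simp only [mul_add, add_mul, mul_neg, neg_mul, mul_comm w q]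
  abel

theorem miyamoto_miyamoto (x : A) : miyamoto α β a (miyamoto α β a x) = x := by
  obtain ⟨p, hp, w, hw, rfl⟩ := ha.exists_evenPart_add x
  simp only [map_add, miyamoto_of_mem_evenPart hp, miyamoto_of_mem_axEig hβ0 hβ1 hαβ hw, map_neg,
    neg_neg]

omit hβ0 hβ1 hαβ in
theorem miyamoto_self : miyamoto α β a a = a :=
  miyamoto_of_mem_evenPart
    (Submodule.mem_sup_left (Submodule.mem_sup_left (by simp [ha.idem])))

theorem exists_components (x : A) : ∃ (l : F) (u v w : A), a * u = 0 ∧ a * v = α • v ∧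
    a * w = β • w ∧ x = l • a + u + v + w ∧ miyamoto α β a x = l • a + u + v - w := by
  obtain ⟨p, hp, w, hw, rfl⟩ := ha.exists_evenPart_add x
  have e : miyamoto α β a (p + w) = p - w := by
    rw [map_add, miyamoto_of_mem_evenPart hp, miyamoto_of_mem_axEig hβ0 hβ1 hαβ hw, sub_eq_add_neg]
  obtain ⟨l, u, v, hu, hv, rfl⟩ := ha.exists_smul_add_add_of_mem_evenPart hp
  exact ⟨l, u, v, w, hu, hv, hw, rfl, e⟩

theorem exists_components_of_miyamoto_eq (h2 : (2 : F) ≠ 0) {x : A} (hx : miyamoto α β a x = x) :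
    ∃ (l : F) (u v : A), a * u = 0 ∧ a * v = α • v ∧ x = l • a + u + v := by
  obtain ⟨l, u, v, w, hu, hv, -, h, h'⟩ := ha.exists_components hβ0 hβ1 hαβ x
  rw [hx] at h'
  have hw : (2 : F) • w = 0 := by linear_combination (norm := module) h' - h
  rw [(smul_eq_zero_iff_right h2).1 hw, add_zero] at h
  exact ⟨l, u, v, hu, hv, h⟩

end IsPrimitiveMonsterAxis

/-- The product of `a` and `b` corrected so that it is fixed by the Miyamoto involutions of
both. -/
def sProd (β : F) (a b : A) : A := a * b - β • (a + b)

theorem sProd_comm (a b : A) : sProd β a b = sProd β b a := by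
  rw [sProd, sProd, mul_comm, add_comm]

theorem mul_eq_sProd_add (a b : A) : a * b = sProd β a b + β • (a + b) := by
  rw [sProd, sub_add_cancel]

namespace IsPrimitiveMonsterAxis

variable (ha : IsPrimitiveMonsterAxis F A α β a) (hβ0 : β ≠ 0) (hβ1 : β ≠ 1) (hαβ : α ≠ β)

include ha hβ0 hβ1 hαβ

theorem miyamoto_sProd (x y : A) : miyamoto α β a (sProd β x y) =
    sProd β (miyamoto α β a x) (miyamoto α β a y) := by
  simp only [sProd, map_sub, map_smul, map_add, ha.miyamoto_mul hβ0 hβ1 hαβ]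

theorem sProd_miyamoto (b : A) : sProd β a (miyamoto α β a b) = sProd β a b := by
  obtain ⟨l, u, v, w, hu, hv, hw, hb, hc⟩ := ha.exists_components hβ0 hβ1 hαβ b
  rw [hc, sProd, sProd, hb]
  simp only [mul_add, mul_sub, mul_smul_comm, ha.idem, hu, hv, hw]
  module

theorem miyamoto_sProd_self (b : A) : miyamoto α β a (sProd β a b) = sProd β a b := by
  rw [ha.miyamoto_sProd hβ0 hβ1 hαβ, ha.miyamoto_self, ha.sProd_miyamoto hβ0 hβ1 hαβ]

variable (h2 : (2 : F) ≠ 0)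

include h2

theorem exists_mul_sProd (b : A) : ∃ k : F, a * sProd β a b =
    (α - β) • (sProd β a b + (β / 2) • (b + miyamoto α β a b)) + k • a := by
  obtain ⟨l, u, v, w, hu, hv, hw, hb, hc⟩ := ha.exists_components hβ0 hβ1 hαβ b
  refine ⟨(l - β * l - β) * (1 - (α - β)) - (α - β) * β * l, ?_⟩
  have hx : b + miyamoto α β a b = (2 : F) • (l • a + u + v) := by rw [hc, hb]; module
  rw [hx, smul_smul, div_mul_cancel₀ _ h2, sProd, hb]
  simp only [mul_add, mul_sub, mul_smul_comm, ha.idem, hu, hv, hw, mul_zero]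
  module

/-- The fusion law at `a`, evaluated on the even components of `b`, where `d` is the image of `a`
under the Miyamoto involution of `b`. -/
theorem exists_fusion_products {b d : A} (hb : b * b = b) {k : F}
    (hbs : b * sProd β a b = (α - β) • (sProd β a b + (β / 2) • (a + d)) + k • b) :
    let c := miyamoto α β a b
    let e := miyamoto α β a d
    let s := sProd β a b
    ∃ (l g m r : F) (P Q R : A), a * P = 0 ∧ a * Q = α • Q ∧ a * R = r • a ∧
      P + (2 : F) • Q + R = ((1 + 2 * β) / 2 ^ 2) • (b + c) + (1 / 2 : F) • sProd β b c
        - l • ((2 : F) • s + (2 * β) • a + β • (b + c)) + l ^ 2 • a ∧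
      (-β) • P + (α - 2 * β) • Q + (α - β) • R =
        (1 / 2 : F) • ((α - β) • ((2 : F) • s + (β / 2) • ((2 : F) • a + (d + e))) + k • (b + c))
        - (g / 2) • ((2 : F) • s + (2 * β) • a + β • (b + c))
        - l • ((α - β) • (s + (β / 2) • (b + c)) + m • a) + (l * g) • a ∧
      β ^ 2 • P - (2 * β * (α - β)) • Q + (α - β) ^ 2 • R =
        s * s - (2 * g) • ((α - β) • (s + (β / 2) • (b + c)) + m • a) + g ^ 2 • a := by
  intro c e s
  have hcc : c * c = c := by rw [← ha.miyamoto_mul hβ0 hβ1 hαβ, hb]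
  have hcs : c * s = (α - β) • (s + (β / 2) • (a + e)) + k • c := by
    have := congrArg (miyamoto α β a) hbs
    rw [ha.miyamoto_mul hβ0 hβ1 hαβ] at this
    simp only [map_add, map_smul, ha.miyamoto_self] at this
    rwa [ha.miyamoto_sProd_self hβ0 hβ1 hαβ] at this
  obtain ⟨m, hm⟩ := ha.exists_mul_sProd hβ0 hβ1 hαβ h2 b
  obtain ⟨l, u, v, w, hu, hv, hw, hb', hc'⟩ := ha.exists_components hβ0 hβ1 hαβ b
  obtain ⟨r, hr⟩ := ha.mul_alpha_alpha hv hv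
  have hab : a * b = s + β • (a + b) := mul_eq_sProd_add a b
  have hac : a * c = s + β • (a + c) := by
    rw [mul_eq_sProd_add (β := β) a c, ha.sProd_miyamoto hβ0 hβ1 hαβ]
  have hbc : b * c = sProd β b c + β • (b + c) := mul_eq_sProd_add b c
  have huv : u + v = (1 / 2 : F) • (b + c) - l • a := by
    change c = _ at hc'
    rw [hc', hb']
    match_scalars <;> field_simp <;> ring
  have hsg : (-β) • u + (α - β) • v = s - (l - β * l - β) • a := by
    simp only [s, sProd, hb', mul_add, mul_smul_comm, ha.idem, hu, hv, hw]
    module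
  refine ⟨l, l - β * l - β, m, r, u * u, u * v, v * v, ha.mul_zero_zero hu hu,
    ha.mul_zero_alpha hu hv, hr, ?_, ?_, ?_⟩
  · have h := congrArg₂ (· * ·) huv huv
    simp only [mul_add, add_mul, mul_sub, sub_mul, smul_mul_assoc, mul_smul_comm, mul_comm v u,
      mul_comm b a, mul_comm c a, mul_comm c b, hab, hac, hbc, hb, hcc, ha.idem] at h
    linear_combination (norm := (match_scalars <;> field_simp <;> ring)) h
  · have h := congrArg₂ (· * ·) huv hsg
    simp only [mul_add, add_mul, mul_sub, sub_mul, smul_mul_assoc, mul_smul_comm, mul_comm v u,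
      mul_comm b a, mul_comm c a, hab, hac, hcs, ha.idem] at h
    linear_combination (norm := module) h + (1 / 2 : F) • hbs - l • hm
  · have h := congrArg₂ (· * ·) hsg hsg
    simp only [mul_add, add_mul, mul_sub, sub_mul, smul_mul_assoc, mul_smul_comm, mul_comm v u,
      mul_comm s a, ha.idem] at h
    linear_combination (norm := module) h - (2 * (l - β * l - β)) • hm

/-- Consequences of the fusion law at `a`, modulo a subspace `Y`: the product of `a` with
`sProd β b (miyamoto α β a b)` reduces to lower products, and a multiple of
`d + miyamoto α β a d` is congruent to a multiple of the square of `sProd β a b`. -/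
theorem fusion_consequences (hα0 : α ≠ 0) (h2β : α ≠ 2 * β) {b d : A} (hb : b * b = b) {k : F}
    (hbs : b * sProd β a b = (α - β) • (sProd β a b + (β / 2) • (a + d)) + k • b)
    {Y : Submodule F A} (hYa : a ∈ Y) (hYx : b + miyamoto α β a b ∈ Y) (hYs : sProd β a b ∈ Y)
    (hYsd : sProd β a d ∈ Y) :
    (d + miyamoto α β a d ∈ Y → a * sProd β b (miyamoto α β a b) ∈ Y) ∧
    (sProd β b (miyamoto α β a b) ∈ Y →
      (4 * (α - 2 * β)) • (sProd β a b * sProd β a b)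
        - (β * (α - β) ^ 2 * (α - 4 * β)) • (d + miyamoto α β a d) ∈ Y) := by
  obtain ⟨l, g, m, r, P, Q, R, hP, hQ, hR, e1, e2, e3⟩ :=
    ha.exists_fusion_products hβ0 hβ1 hαβ h2 hb hbs
  have h2β' : α - 2 * β ≠ 0 := sub_ne_zero.2 h2β
  have hax : a * (b + miyamoto α β a b) = (2 : F) • sProd β a b + (2 * β) • a
      + β • (b + miyamoto α β a b) := by
    rw [mul_add, mul_eq_sProd_add (β := β) a b, mul_eq_sProd_add (β := β) a (miyamoto α β a b),
      ha.sProd_miyamoto hβ0 hβ1 hαβ]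
    module
  have had : a * (d + miyamoto α β a d) = (2 : F) • sProd β a d + (2 * β) • a
      + β • (d + miyamoto α β a d) := by
    rw [mul_add, mul_eq_sProd_add (β := β) a d, mul_eq_sProd_add (β := β) a (miyamoto α β a d),
      ha.sProd_miyamoto hβ0 hβ1 hαβ]
    module
  obtain ⟨n, has⟩ := ha.exists_mul_sProd hβ0 hβ1 hαβ h2 b
  generalize sProd β b (miyamoto α β a b) = t at *
  generalize b + miyamoto α β a b = x at *
  generalize d + miyamoto α β a d = y at *
  generalize sProd β a b * sProd β a b = S at *
  generalize sProd β a b = s at *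
  have e1a := congrArg (a * ·) e1
  have e2a := congrArg (a * ·) e2
  simp only [mul_add, mul_sub, mul_smul_comm, hP, hQ, hR, hax, had, has, ha.idem, smul_zero]
    at e1a e2a
  have za : Y.mkQ a = 0 := by simpa using hYa
  have zx : Y.mkQ x = 0 := by simpa using hYx
  have zs : Y.mkQ s = 0 := by simpa using hYs
  have zd : Y.mkQ (sProd β a d) = 0 := by simpa using hYsd
  replace e1 := congrArg Y.mkQ e1
  replace e2 := congrArg Y.mkQ e2
  replace e3 := congrArg Y.mkQ e3
  replace e1a := congrArg Y.mkQ e1a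
  replace e2a := congrArg Y.mkQ e2a
  simp only [map_add, map_sub, map_smul, za, zx, zs, zd, smul_zero, add_zero, zero_add, sub_zero]
    at e1 e2 e3 e1a e2a
  have hmk : ∀ z : A, Y.mkQ z = 0 → z ∈ Y := fun z hz => by simpa using hz
  constructor
  · intro hy
    have zy : Y.mkQ y = 0 := by simpa using hy
    simp only [zy, smul_zero] at e2a
    have hQ0 : Y.mkQ Q = 0 := by simpa [h2β', hα0] using e2a
    simp only [hQ0, smul_zero] at e1a
    exact hmk _ (by simpa [h2] using e1a.symm)
  · intro ht
    have zt : Y.mkQ t = 0 := by simpa using ht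
    simp only [zt, smul_zero] at e1
    refine hmk _ ?_
    simp only [map_sub, map_smul]
    linear_combination (norm := (match_scalars <;> field_simp <;> ring))
      (4 * (α - 2 * β)) • ((β * (α - β)) • e1 + (α - 2 * β) • e2 - e3) - (4 * α) • e2a

/-- If `W` is stable under multiplication by `a`, by `b` and by the Miyamoto conjugate of `b`, then
multiplication by `sProd β a b` maps the `miyamoto`-invariants of `W` to `W`. -/
theorem sProd_mul_mem (hα0 : α ≠ 0) {W : Submodule F A} (haW : a ∈ W) {b : A} (hbW : b ∈ W)
    (hWa : ∀ y ∈ W, a * y ∈ W) (hWb : ∀ y ∈ W, b * y ∈ W)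
    (hWc : ∀ y ∈ W, miyamoto α β a b * y ∈ W) {y : A} (hy : y ∈ W)
    (hτ : miyamoto α β a y = y) : sProd β a b * y ∈ W := by
  obtain ⟨l, u, v, w, hu, hv, hw, hb, hc⟩ := ha.exists_components hβ0 hβ1 hαβ b
  obtain ⟨m, y₀, yα, hy₀, hyα, rfl⟩ := ha.exists_components_of_miyamoto_eq hβ0 hβ1 hαβ h2 hτ
  have hyαW : yα ∈ W := by
    have h := sub_mem (hWa _ hy) (W.smul_mem m haW)
    have e : a * (m • a + y₀ + yα) - m • a = α • yα := by
      simp only [mul_add, mul_smul_comm, ha.idem, hy₀, hyα]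
      module
    rw [e] at h
    exact (W.smul_mem_iff hα0).1 h
  have hy₀W : y₀ ∈ W := by
    have h := sub_mem (sub_mem hy hyαW) (W.smul_mem m haW)
    have e : m • a + y₀ + yα - yα - m • a = y₀ := by abel
    rwa [e] at h
  have huv : ∀ z ∈ W, u * z + v * z ∈ W := by
    intro z hz
    have h := sub_mem (W.smul_mem (1 / 2 : F) (add_mem (hWb z hz) (hWc z hz)))
      (W.smul_mem l (hWa z hz))
    have e : (1 / 2 : F) • (b * z + miyamoto α β a b * z) - l • (a * z) = u * z + v * z := by
      rw [hc, hb]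
      simp only [add_mul, sub_mul, smul_mul_assoc]
      match_scalars <;> field_simp <;> ring
    rwa [e] at h
  have hv₀ : v * y₀ ∈ W := by
    have h := hWa _ (huv _ hy₀W)
    rw [mul_add, ha.mul_zero_zero hu hy₀, mul_comm v, ha.mul_zero_alpha hy₀ hv, zero_add] at h
    rw [mul_comm]
    exact (W.smul_mem_iff hα0).1 h
  have huα : u * yα ∈ W := by
    obtain ⟨r, hr⟩ := ha.mul_alpha_alpha hv hyα
    have h := hWa _ (huv _ hyαW)
    rw [mul_add, ha.mul_zero_alpha hu hyα, hr] at h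
    exact (W.smul_mem_iff hα0).1 ((W.add_mem_iff_left (W.smul_mem r haW)).1 h)
  have hu₀ : u * y₀ ∈ W := (W.add_mem_iff_left hv₀).1 (huv _ hy₀W)
  have hvα : v * yα ∈ W := (W.add_mem_iff_right huα).1 (huv _ hyαW)
  have hvW : v * (y₀ + yα) ∈ W := by rw [mul_add]; exact add_mem hv₀ hvα
  have huW : u * (y₀ + yα) ∈ W := by rw [mul_add]; exact add_mem hu₀ huα
  have hsa : a * sProd β a b ∈ W :=
    hWa _ (sub_mem (hWa b hbW) (W.smul_mem _ (add_mem haW hbW)))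
  have e : sProd β a b * (m • a + y₀ + yα) = m • (a * sProd β a b)
      + (l - β * l - β) • (a * (y₀ + yα)) - β • (u * (y₀ + yα)) + (α - β) • (v * (y₀ + yα)) := by
    have hs : sProd β a b = (l - β * l - β) • a - β • u + (α - β) • v := by
      simp only [sProd, hb, mul_add, mul_smul_comm, ha.idem, hu, hv, hw]
      module
    rw [add_assoc, mul_add, mul_smul_comm, mul_comm _ a, hs]
    simp only [add_mul _ _ (y₀ + yα), sub_mul _ _ (y₀ + yα), smul_mul_assoc]
    module
  rw [e]
  exact add_mem (sub_mem (add_mem (W.smul_mem _ hsa) (W.smul_mem _ (hWa _ (add_mem hy₀W hyαW))))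
    (W.smul_mem _ huW)) (W.smul_mem _ hvW)

end IsPrimitiveMonsterAxis

/-- The span of five consecutive axes of the orbit of `a` and `b`, and of three of the elements
`sProd β`. -/
def rehrenSpan (α β : F) (a b : A) : Submodule F A :=
  Submodule.span F {a, b, miyamoto α β a b, miyamoto α β b a,
    miyamoto α β a (miyamoto α β b a), sProd β a b, sProd β a (miyamoto α β b a),
    sProd β b (miyamoto α β a b)}

theorem rehrenSpan_le_iff {b : A} {W : Submodule F A} : rehrenSpan α β a b ≤ W ↔
    a ∈ W ∧ b ∈ W ∧ miyamoto α β a b ∈ W ∧ miyamoto α β b a ∈ W ∧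
    miyamoto α β a (miyamoto α β b a) ∈ W ∧ sProd β a b ∈ W ∧ sProd β a (miyamoto α β b a) ∈ W ∧
    sProd β b (miyamoto α β a b) ∈ W := by
  simp [rehrenSpan, Submodule.span_le, Set.insert_subset_iff]

theorem rank_rehrenSpan_le (a b : A) : Module.rank F (rehrenSpan α β a b) ≤ 8 := by
  classical
  have e : rehrenSpan α β a b = Submodule.span F (({a, b, miyamoto α β a b, miyamoto α β b a,
      miyamoto α β a (miyamoto α β b a), sProd β a b, sProd β a (miyamoto α β b a),
      sProd β b (miyamoto α β a b)} : Finset A) : Set A) := by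
    rw [rehrenSpan]
    push_cast
    rfl
  rw [e]
  refine (rank_span_finset_le _).trans ?_
  exact_mod_cast (Finset.card_insert_le _ _).trans
    (Nat.succ_le_succ ((Finset.card_insert_le _ _).trans (Nat.succ_le_succ Finset.card_le_six)))

section TwoAxes

variable {b : A} (ha : IsPrimitiveMonsterAxis F A α β a) (hb : IsPrimitiveMonsterAxis F A α β b)
  (h2 : (2 : F) ≠ 0) (hα0 : α ≠ 0) (hβ0 : β ≠ 0) (hβ1 : β ≠ 1) (hαβ : α ≠ β) (h2β : α ≠ 2 * β)

include ha hβ0 hβ1 hαβ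

theorem miyamoto_mem_rehrenSpan {x : A} (hx : x ∈ rehrenSpan α β a b) :
    miyamoto α β a x ∈ rehrenSpan α β a b := by
  obtain ⟨ma, mb, mc, md, me, ms, msd, msc⟩ := rehrenSpan_le_iff.1 (le_refl (rehrenSpan α β a b))
  have h : rehrenSpan α β a b ≤ (rehrenSpan α β a b).comap (miyamoto α β a) := by
    simp only [rehrenSpan_le_iff, Submodule.mem_comap, ha.miyamoto_self,
      ha.miyamoto_miyamoto hβ0 hβ1 hαβ, ha.miyamoto_sProd_self hβ0 hβ1 hαβ]
    rw [ha.miyamoto_sProd hβ0 hβ1 hαβ, ha.miyamoto_miyamoto hβ0 hβ1 hαβ,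
      sProd_comm (miyamoto α β a b) b]
    exact ⟨ma, mc, mb, me, md, ms, msd, msc⟩
  exact h hx

include hb h2 hα0 h2β

theorem axis_mul_mem_rehrenSpan {x : A} (hx : x ∈ rehrenSpan α β a b) :
    a * x ∈ rehrenSpan α β a b := by
  obtain ⟨ma, mb, mc, md, me, ms, msd, msc⟩ := rehrenSpan_le_iff.1 (le_refl (rehrenSpan α β a b))
  have hmul : ∀ y, y ∈ rehrenSpan α β a b → sProd β a y ∈ rehrenSpan α β a b →
      a * y ∈ rehrenSpan α β a b := fun y hy h => by
    rw [mul_eq_sProd_add (β := β)]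
    exact add_mem h (Submodule.smul_mem _ _ (add_mem ma hy))
  have hs : ∀ y, sProd β a y ∈ rehrenSpan α β a b → y ∈ rehrenSpan α β a b →
      miyamoto α β a y ∈ rehrenSpan α β a b → a * sProd β a y ∈ rehrenSpan α β a b :=
    fun y h hy hy' => by
      obtain ⟨k, hk⟩ := ha.exists_mul_sProd hβ0 hβ1 hαβ h2 y
      rw [hk]
      exact add_mem (Submodule.smul_mem _ _ (add_mem h (Submodule.smul_mem _ _ (add_mem hy hy'))))
        (Submodule.smul_mem _ _ ma)
  obtain ⟨k, hk⟩ := hb.exists_mul_sProd hβ0 hβ1 hαβ h2 a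
  rw [sProd_comm] at hk
  have h : rehrenSpan α β a b ≤ (rehrenSpan α β a b).comap (LinearMap.mulLeft F a) := by
    simp only [rehrenSpan_le_iff, Submodule.mem_comap, LinearMap.mulLeft_apply]
    refine ⟨ha.idem.symm ▸ ma, hmul _ mb ms, hmul _ mc ?_, hmul _ md msd, hmul _ me ?_,
      hs _ ms mb mc, hs _ msd md me, ?_⟩
    · rwa [ha.sProd_miyamoto hβ0 hβ1 hαβ]
    · rwa [ha.sProd_miyamoto hβ0 hβ1 hαβ]
    · exact (ha.fusion_consequences hβ0 hβ1 hαβ h2 hα0 h2β hb.idem hk ma (add_mem mb mc) ms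
        msd).1 (add_mem md me)
  exact h hx

variable (h4β : α ≠ 4 * β)

include h4β

theorem rehrenSpan_swap_le : rehrenSpan α β b a ≤ rehrenSpan α β a b := by
  obtain ⟨ma, mb, mc, md, me, ms, msd, msc⟩ := rehrenSpan_le_iff.1 (le_refl (rehrenSpan α β a b))
  refine rehrenSpan_le_iff.2 ⟨mb, ma, md, mc, ?_, by rwa [sProd_comm], msc, msd⟩
  obtain ⟨k, hk⟩ := hb.exists_mul_sProd hβ0 hβ1 hαβ h2 a
  obtain ⟨k', hk'⟩ := ha.exists_mul_sProd hβ0 hβ1 hαβ h2 b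
  have ms' : sProd β b a ∈ rehrenSpan α β a b := by rwa [sProd_comm]
  have h := (hb.fusion_consequences hβ0 hβ1 hαβ h2 hα0 h2β ha.idem
    (by rw [sProd_comm]; exact hk') mb (add_mem ma md) ms' msc).2 msd
  have h' := (ha.fusion_consequences hβ0 hβ1 hαβ h2 hα0 h2β hb.idem
    (by rw [sProd_comm]; exact hk) ma (add_mem mb mc) ms msd).2 msc
  have hK : β * (α - β) ^ 2 * (α - 4 * β) ≠ 0 := mul_ne_zero
    (mul_ne_zero hβ0 (pow_ne_zero 2 (sub_ne_zero.2 hαβ))) (sub_ne_zero.2 h4β)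
  have hS := ((Submodule.sub_mem_iff_left _ (Submodule.smul_mem _ _ (add_mem md me))).1 h')
  rw [sProd_comm b a] at h
  have hcf := (Submodule.smul_mem_iff _ hK).1 ((Submodule.sub_mem_iff_right _ hS).1 h)
  exact (Submodule.add_mem_iff_right _ mc).1 hcf

theorem rehrenSpan_swap : rehrenSpan α β b a = rehrenSpan α β a b :=
  le_antisymm (rehrenSpan_swap_le ha hb h2 hα0 hβ0 hβ1 hαβ h2β h4β)
    (rehrenSpan_swap_le hb ha h2 hα0 hβ0 hβ1 hαβ h2β h4β)

theorem mul_mem_rehrenSpan {x y : A} (hx : x ∈ rehrenSpan α β a b)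
    (hy : y ∈ rehrenSpan α β a b) : x * y ∈ rehrenSpan α β a b := by
  have hswap := rehrenSpan_swap ha hb h2 hα0 hβ0 hβ1 hαβ h2β h4β
  obtain ⟨ma, mb, mc, md, me, ms, msd, msc⟩ := rehrenSpan_le_iff.1 (le_refl (rehrenSpan α β a b))
  have mulA : ∀ z ∈ rehrenSpan α β a b, a * z ∈ rehrenSpan α β a b := fun z hz =>
    axis_mul_mem_rehrenSpan ha hb h2 hα0 hβ0 hβ1 hαβ h2β hz
  have mulB : ∀ z ∈ rehrenSpan α β a b, b * z ∈ rehrenSpan α β a b := by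
    rw [← hswap]
    exact fun z hz => axis_mul_mem_rehrenSpan hb ha h2 hα0 hβ0 hβ1 hαβ h2β hz
  have conjA : ∀ t, (∀ z ∈ rehrenSpan α β a b, t * z ∈ rehrenSpan α β a b) →
      ∀ z ∈ rehrenSpan α β a b, miyamoto α β a t * z ∈ rehrenSpan α β a b := by
    intro t ht z hz
    have h := miyamoto_mem_rehrenSpan ha hβ0 hβ1 hαβ
      (ht _ (miyamoto_mem_rehrenSpan ha hβ0 hβ1 hαβ hz))
    rwa [ha.miyamoto_mul hβ0 hβ1 hαβ, ha.miyamoto_miyamoto hβ0 hβ1 hαβ] at h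
  have conjB : ∀ t, (∀ z ∈ rehrenSpan α β a b, t * z ∈ rehrenSpan α β a b) →
      ∀ z ∈ rehrenSpan α β a b, miyamoto α β b t * z ∈ rehrenSpan α β a b := by
    rw [← hswap]
    intro t ht z hz
    have h := miyamoto_mem_rehrenSpan hb hβ0 hβ1 hαβ
      (ht _ (miyamoto_mem_rehrenSpan hb hβ0 hβ1 hαβ hz))
    rwa [hb.miyamoto_mul hβ0 hβ1 hαβ, hb.miyamoto_miyamoto hβ0 hβ1 hαβ] at h
  have mulC := conjA b mulB
  have mulD := conjB a mulA
  have mulE := conjA _ mulD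
  have fixS := ha.miyamoto_sProd_self hβ0 hβ1 hαβ b
  have fixSD := ha.miyamoto_sProd_self hβ0 hβ1 hαβ (miyamoto α β b a)
  have fixSC : miyamoto α β a (sProd β b (miyamoto α β a b)) = sProd β b (miyamoto α β a b) := by
    rw [ha.miyamoto_sProd hβ0 hβ1 hαβ, ha.miyamoto_miyamoto hβ0 hβ1 hαβ, sProd_comm]
  have mulS : ∀ z ∈ rehrenSpan α β a b, miyamoto α β a z = z →
      sProd β a b * z ∈ rehrenSpan α β a b := fun z hz =>
    ha.sProd_mul_mem hβ0 hβ1 hαβ h2 hα0 ma mb mulA mulB mulC hz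
  have mulSD : ∀ z ∈ rehrenSpan α β a b, miyamoto α β a z = z →
      sProd β a (miyamoto α β b a) * z ∈ rehrenSpan α β a b := fun z hz =>
    ha.sProd_mul_mem hβ0 hβ1 hαβ h2 hα0 ma md mulA mulD mulE hz
  have mulSC := hb.sProd_mul_mem hβ0 hβ1 hαβ h2 hα0 mb mc mulB mulC (conjB _ mulC) msc
    (hb.miyamoto_sProd_self hβ0 hβ1 hαβ _)
  have key : ∀ t ∈ rehrenSpan α β a b, sProd β a b * t ∈ rehrenSpan α β a b →
      sProd β a (miyamoto α β b a) * t ∈ rehrenSpan α β a b →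
      sProd β b (miyamoto α β a b) * t ∈ rehrenSpan α β a b →
      ∀ z ∈ rehrenSpan α β a b, z * t ∈ rehrenSpan α β a b := by
    intro t ht h₁ h₂ h₃ z hz
    have h : rehrenSpan α β a b ≤ (rehrenSpan α β a b).comap (LinearMap.mulRight F t) :=
      rehrenSpan_le_iff.2 ⟨mulA t ht, mulB t ht, mulC t ht, mulD t ht, mulE t ht, h₁, h₂, h₃⟩
    exact h hz
  refine key y hy ?_ ?_ ?_ x hx <;> rw [mul_comm]
  · refine key _ ms (mulS _ ms fixS) (mulSD _ ms fixS) ?_ y hy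
    rw [mul_comm]
    exact mulS _ msc fixSC
  · refine key _ msd (mulS _ msd fixSD) (mulSD _ msd fixSD) ?_ y hy
    rw [mul_comm]
    exact mulSD _ msc fixSC
  · exact key _ msc (mulS _ msc fixSC) (mulSD _ msc fixSC) mulSC y hy

end TwoAxes

end Axis

theorem rehren_dimension_bound
    (hchar : ringChar F ≠ 2) (α β : F)
    (hα0 : α ≠ 0) (hα1 : α ≠ 1) (hβ0 : β ≠ 0) (hβ1 : β ≠ 1) (hαβ : α ≠ β)
    (h2β : α ≠ 2 * β) (h4β : α ≠ 4 * β)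
    (hgen : IsTwoGeneratedMonsterType F A α β) :
    Module.rank F A ≤ 8 := by
  obtain ⟨a, b, ha, hb, htop⟩ := hgen
  have h2 : (2 : F) ≠ 0 := Ring.two_ne_zero hchar
  have hW : rehrenSpan α β a b = ⊤ := by
    let S : NonUnitalSubalgebra F A :=
      { rehrenSpan α β a b with
        mul_mem' := fun hx hy => mul_mem_rehrenSpan ha hb h2 hα0 hβ0 hβ1 hαβ h2β h4β hx hy }
    obtain ⟨ma, mb, -⟩ := rehrenSpan_le_iff.1 (le_refl (rehrenSpan α β a b))
    have hS : NonUnitalAlgebra.adjoin F ({a, b} : Set A) ≤ S :=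
      NonUnitalAlgebra.adjoin_le (Set.pair_subset ma mb)
    rw [htop] at hS
    exact Submodule.eq_top_iff'.2 fun x => hS (NonUnitalAlgebra.mem_top (R := F))
  rw [← rank_top F A, ← hW]
  exact rank_rehrenSpan_le a b
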